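/- Let G be a finite, connected, simple graph with maximum degree at most 3, nonnegative Ricci curvature, and diameter at least 6, and let P = v_0 v_1 ⋯ v_l be a diameter path with l ≥ 6. Suppose that for every i with 1 ≤ i ≤ l − 1, the vertex v_i has no neighbor u ∉ {v_{i−1}, v_{i+1}} with d(v_0, u) ≤ i, and that the set K = { i : 1 ≤ i ≤ l − 1 and v_i has a neighbor u ∉ {v_{i−1}, v_{i+1}} with d(v_0, u) = i + 1 } is nonempty. Then max K ∈ {l−2, l−1}. -/

import Mathlib

open SimpleGraph

variable {V : Type*}

/-- Combinatorial (unnormalized) graph Laplacian. -/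
def lapl (G : SimpleGraph V) [G.LocallyFinite] (f : V → ℝ) (x : V) : ℝ :=
  ∑ y ∈ G.neighborFinset x, (f y - f x)

/-- Lin-Lu-Yau-Ollivier Ricci curvature (limit-free definition):
`κ(u,v) = inf { Δf(u) − Δf(v) : f 1-Lipschitz w.r.t. graph distance, f v − f u = 1 }`. -/
noncomputable def ricci (G : SimpleGraph V) [G.LocallyFinite] (u v : V) : ℝ :=
  sInf { r : ℝ | ∃ f : V → ℝ,
    (∀ x y : V, |f x - f y| ≤ (G.dist x y : ℝ)) ∧ f v - f u = 1 ∧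
    r = lapl G f u - lapl G f v }

/-- Nonnegative Ricci curvature on every edge. -/
def NonnegRicci (G : SimpleGraph V) [G.LocallyFinite] : Prop :=
  ∀ u v : V, G.Adj u v → 0 ≤ ricci G u v
/-- The Laplacian of a 1-Lipschitz function is bounded by the degree. -/
theorem abs_lapl_le_degree (G : SimpleGraph V) [G.LocallyFinite] {f : V → ℝ}
    (hf : ∀ x y : V, |f x - f y| ≤ (G.dist x y : ℝ)) (x : V) :
    |lapl G f x| ≤ G.degree x := by
  refine (Finset.abs_sum_le_sum_abs _ _).trans ?_
  refine (Finset.sum_le_card_nsmul _ _ 1 fun y hy => ?_).trans (by simp)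
  have hxy : G.Adj x y := by simpa using hy
  simpa [dist_eq_one_iff_adj.mpr hxy.symm] using hf y x

/-- Every admissible test function bounds the curvature from above. -/
theorem ricci_le_lapl_sub (G : SimpleGraph V) [G.LocallyFinite] {u v : V} {f : V → ℝ}
    (hf : ∀ x y : V, |f x - f y| ≤ (G.dist x y : ℝ)) (huv : f v - f u = 1) :
    ricci G u v ≤ lapl G f u - lapl G f v := by
  refine csInf_le ⟨-(G.degree u : ℝ) - G.degree v, ?_⟩ ⟨f, hf, huv, rfl⟩
  rintro r ⟨g, hg, -, rfl⟩
  have h₁ := abs_le.mp (abs_lapl_le_degree G hg u)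
  have h₂ := abs_le.mp (abs_lapl_le_degree G hg v)
  linarith

/-- The negated distance to a fixed vertex is 1-Lipschitz. -/
theorem abs_neg_dist_sub_le (G : SimpleGraph V) (hconn : G.Connected) (z x y : V) :
    |(-(G.dist x z : ℝ)) - -(G.dist y z : ℝ)| ≤ G.dist x y := by
  have h₁ : (G.dist x z : ℝ) ≤ G.dist x y + G.dist y z := mod_cast hconn.dist_triangle
  have h₂ : (G.dist y z : ℝ) ≤ G.dist y x + G.dist x z := mod_cast hconn.dist_triangle
  rw [G.dist_comm (u := y) (v := x)] at h₂
  rw [abs_le]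
  constructor <;> linarith

/-- If `u ≠ z` and neither `u` nor any neighbor of `u` is adjacent to `z`, then
`d(u, z) ≥ 3`. -/
theorem three_le_dist (G : SimpleGraph V) (hconn : G.Connected) {u z : V} (hne : u ≠ z)
    (h : ∀ w, (w = u ∨ G.Adj u w) → ¬ G.Adj w z) : 3 ≤ G.dist u z := by
  obtain ⟨p, hp⟩ := hconn.exists_walk_length_eq_dist u z
  rw [← hp]
  clear hp
  match p with
  | .nil => exact absurd rfl hne
  | .cons h₁ .nil => exact absurd h₁ (h u (Or.inl rfl))
  | .cons h₁ (.cons h₂ .nil) => exact absurd h₂ (h _ (Or.inr h₁))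
  | .cons _ (.cons _ (.cons _ _)) => simp [Walk.length_cons]

/-- In a geodesic `a, b, c, d`, if `b` has a third neighbor `u` with `d(u, d) ≥ 3`, `b` has
degree at most three and `c` has no neighbors besides `b` and `d`, then `b c` is negatively
curved. -/
theorem ricci_neg_of_branch (G : SimpleGraph V) [G.LocallyFinite] (hconn : G.Connected)
    {a b c d u : V} (hdeg : G.degree b ≤ 3) (hba : G.Adj b a) (hbc : G.Adj b c)
    (hbu : G.Adj b u) (hcd : G.Adj c d) (hua : u ≠ a)
    (hc : ∀ w, G.Adj c w → w = b ∨ w = d) (had : 3 ≤ G.dist a d) (hud : 3 ≤ G.dist u d) :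
    ricci G b c < 0 := by
  classical
  have hcd1 : G.dist c d = 1 := dist_eq_one_iff_adj.mpr hcd
  have hstep : ∀ {x y : V}, G.Adj x y → G.dist x d ≤ G.dist y d + 1 := fun {x y} h => by
    have := hconn.dist_triangle (u := x) (v := y) (w := d)
    have := dist_eq_one_iff_adj.mpr h
    omega
  have hbd : G.dist b d = 2 := by
    have := hstep hba.symm
    have := hstep hbc
    omega
  have had3 : G.dist a d = 3 := by
    have := hstep hba.symm
    omega
  have hud3 : G.dist u d = 3 := by
    have := hstep hbu.symm
    omega
  have hac : a ≠ c := by rintro rfl; omega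
  have huc : u ≠ c := by rintro rfl; omega
  have hbd' : b ≠ d := by rintro rfl; simp at hbd
  have hNb : G.neighborFinset b = {a, c, u} := by
    symm
    apply Finset.eq_of_subset_of_card_le
    · intro w hw
      simp only [Finset.mem_insert, Finset.mem_singleton] at hw
      rcases hw with rfl | rfl | rfl <;> simpa
    · rw [G.card_neighborFinset_eq_degree, Finset.card_eq_three.mpr
        ⟨a, c, u, hac, hua.symm, huc.symm, rfl⟩]
      exact hdeg
  have hNc : G.neighborFinset c = {b, d} := by
    ext w
    simp only [mem_neighborFinset, Finset.mem_insert, Finset.mem_singleton]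
    refine ⟨hc w, ?_⟩
    rintro (rfl | rfl)
    exacts [hbc.symm, hcd]
  have hle := ricci_le_lapl_sub G (u := b) (v := c) (f := fun x => -(G.dist x d : ℝ))
    (abs_neg_dist_sub_le G hconn d) (by simp only [hbd, hcd1]; norm_num)
  refine hle.trans_lt ?_
  rw [lapl, lapl, hNb, hNc, Finset.sum_pair hbd', Finset.sum_insert (by simp [hac, hua.symm]),
    Finset.sum_pair huc.symm]
  simp only [hbd, hcd1, had3, hud3, dist_self]
  norm_num

/-- Let `P = v 0, …, v l` (`l ≥ 6`) be a diameter path of a finite,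
connected simple graph `G` with maximum degree at most 3 and nonnegative Ricci curvature.
Suppose no interior vertex `v i` has a third neighbor at distance `≤ i` from `v 0`, and let
`K` be the (nonempty) set of indices `1 ≤ i ≤ l − 1` such that `v i` has a third neighbor
at distance `i + 1` from `v 0`. Then `max K ∈ {l − 2, l − 1}`. -/
theorem max_upward_index (G : SimpleGraph V) [Fintype V] [G.LocallyFinite]
    (hconn : G.Connected) (hdeg : ∀ x : V, G.degree x ≤ 3) (hric : NonnegRicci G)
    (l : ℕ) (hl : 6 ≤ l) (v : ℕ → V)
    (hadj : ∀ i < l, G.Adj (v i) (v (i + 1)))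
    (hinj : ∀ i ≤ l, ∀ j ≤ l, v i = v j → i = j)
    (hgeo : G.dist (v 0) (v l) = l)
    (hdiam : ∀ x y : V, G.dist x y ≤ l)
    (hnolow : ∀ i : ℕ, 1 ≤ i → i ≤ l - 1 →
      ∀ u : V, G.Adj (v i) u → u ≠ v (i - 1) → u ≠ v (i + 1) → ¬ (G.dist (v 0) u ≤ i))
    (K : Set ℕ)
    (hK : K = { i : ℕ | 1 ≤ i ∧ i ≤ l - 1 ∧
      ∃ u : V, G.Adj (v i) u ∧ u ≠ v (i - 1) ∧ u ≠ v (i + 1) ∧ G.dist (v 0) u = i + 1 })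
    (hne : K.Nonempty) :
    sSup K = l - 2 ∨ sSup K = l - 1 := by
  have hle : ∀ i j, i + j ≤ l → G.dist (v i) (v (i + j)) ≤ j := by
    intro i j
    induction j with
    | zero => simp
    | succ j ih =>
      intro h
      have h₁ := ih (by omega)
      have h₂ := hconn.dist_triangle (u := v i) (v := v (i + j)) (w := v (i + (j + 1)))
      have h₃ := dist_eq_one_iff_adj.mpr (hadj (i + j) (by omega))
      rw [add_assoc] at h₃
      omega
  have hdist : ∀ i ≤ l, G.dist (v 0) (v i) = i := by
    intro i hi
    have h₁ := hle 0 i (by omega)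
    have h₂ := hle i (l - i) (by omega)
    have h₃ := hconn.dist_triangle (u := v 0) (v := v i) (w := v l)
    rw [zero_add] at h₁
    rw [Nat.add_sub_cancel' hi] at h₂
    omega
  have hup : ∀ {x y : V}, G.Adj x y → G.dist (v 0) y ≤ G.dist (v 0) x + 1 := fun {x y} h => by
    have := hconn.dist_triangle (u := v 0) (v := x) (w := y)
    have := dist_eq_one_iff_adj.mpr h
    omega
  have hbdd : BddAbove K := ⟨l - 1, fun i hi => by rw [hK] at hi; exact hi.2.1⟩
  have hmem : sSup K ∈ K := Nat.sSup_mem hne hbdd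
  have hmax : ∀ i ∈ K, i ≤ sSup K := fun i hi => le_csSup hbdd hi
  generalize sSup K = k at hmem hmax ⊢
  have hk := hmem
  rw [hK] at hk
  obtain ⟨hk1, hkl, u, hku, hua, hu_ne, hdu⟩ := hk
  by_contra hcon
  have hdeg2 : ∀ i, k < i → i ≤ l - 1 → ∀ w, G.Adj (v i) w → w = v (i - 1) ∨ w = v (i + 1) := by
    intro i hki hil w hw
    by_contra! h
    have h₁ := hnolow i (by omega) hil w hw h.1 h.2
    have h₂ := hup hw
    rw [hdist i (by omega)] at h₂
    have : i ∈ K := by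
      rw [hK]
      exact ⟨by omega, hil, w, hw, h.1, h.2, by omega⟩
    have := hmax i this
    omega
  have hc := hdeg2 (k + 1) (by omega) (by omega)
  have hd := hdeg2 (k + 2) (by omega) (by omega)
  simp only [Nat.add_sub_cancel, show k + 2 - 1 = k + 1 by omega] at hc hd
  have d0 := hdist k (by omega)
  have d2 := hdist (k + 2) (by omega)
  have d3 := hdist (k + 3) (by omega)
  have dm := hdist (k - 1) (by omega)
  have had : 3 ≤ G.dist (v (k - 1)) (v (k + 2)) := by
    have := hconn.dist_triangle (u := v 0) (v := v (k - 1)) (w := v (k + 2))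
    omega
  have hnot_adj : ¬ G.Adj u (v (k + 1)) := fun h => by
    rcases hc u h.symm with rfl | rfl
    · omega
    · change G.dist (v 0) (v (k + 2)) = _ at hdu
      omega
  have hud : 3 ≤ G.dist u (v (k + 2)) := by
    refine three_le_dist G hconn (by rintro rfl; omega) ?_
    intro w hw hadjw
    rcases hd w hadjw.symm with rfl | rfl
    · rcases hw with h | h
      exacts [hu_ne h.symm, hnot_adj h]
    · rcases hw with h | h
      · rw [h] at d3; omega
      · have := hup h
        change G.dist (v 0) (v (k + 3)) ≤ _ at this
        omega
  have hba : G.Adj (v k) (v (k - 1)) := by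
    have := hadj (k - 1) (by omega)
    rw [Nat.sub_add_cancel hk1] at this
    exact this.symm
  exact absurd (hric _ _ (hadj k (by omega))) (not_le.mpr
    (ricci_neg_of_branch G hconn (hdeg _) hba (hadj k (by omega)) hku (hadj (k + 1) (by omega))
      hua hc had hud))
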